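/- Suppose H₀, λ₁⁰, λ₂⁰, λ₁, λ₂, α₁, α₂ are real numbers with H₀ > 0, 0 < λ₁⁰ < λ₂⁰, λ₁⁰ + λ₂⁰ = 2, 0 < λ₁ < λ₂, λ₁ + λ₂ = 2, α₁ > H₀ and α₂ > H₀. Write m = min(α₁/λ₁, α₂/λ₂) and M = max(α₁/λ₁, α₂/λ₂), and note that H₀/λ₁⁰ > H₀/λ₂⁰. Then exactly one of the following five cases holds: (1) H₀/λ₁⁰ ≤ m; (2) H₀/λ₂⁰ < m < H₀/λ₁⁰; (3) m < H₀/λ₂⁰; (4) m = H₀/λ₂⁰ and m < M < H₀/λ₁⁰; (5) m = H₀/λ₂⁰ and M > H₀/λ₁⁰. In particular the configuration m = H₀/λ₂⁰ together with M = H₀/λ₁⁰ is impossible, and so is m = M = H₀/λ₂⁰. -/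

import Mathlib

/-!
Put `x = α₁ / l₁` and `y = α₂ / l₂`. If, say, `x = H₀ / l₂₀`, then `H₀ < α₁` forces `l₁ > l₂₀`, so
`l₂ < l₁₀` because both pairs have the same sum, and `y > H₀ / l₂ > H₀ / l₁₀`; the same holds with
the two directions exchanged (`lt_div_of_div_eq`). Hence
`min x y = H₀ / l₂₀` forces `max x y > H₀ / l₁₀`: on the boundary only the fifth case can occur (the
fourth is void), and both exceptional configurations are excluded. The remaining cases are
separated by the position of `min x y` relative to `H₀ / l₂₀ < H₀ / l₁₀`.
-/

/-- The trace comparison, stated for an unordered pair of directions: if `α / l` equals `H / q`,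
then the ratio `β / k` of the other direction exceeds `H / p`. -/
lemma lt_div_of_div_eq {H p q l k α β : ℝ} (hH : 0 < H) (hq : 0 < q)
    (hl : 0 < l) (hk : 0 < k) (hsum : l + k = p + q) (hα : H < α) (hβ : H < β)
    (h : α / l = H / q) : H / p < β / k := by
  have hql : q < l := by
    rw [div_eq_div_iff hl.ne' hq.ne'] at h
    by_contra! hle
    nlinarith [mul_lt_mul_of_pos_right hα hq, mul_le_mul_of_nonneg_left hle hH.le]
  have hkp : k < p := by linarith
  exact (div_lt_div_of_pos_left hH hk hkp).trans (div_lt_div_of_pos_right hβ hk)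

/-- Lemma 1 of the paper: an arithmetic trichotomy.  With
`m = min (α₁/l₁) (α₂/l₂)` and `M = max (α₁/l₁) (α₂/l₂)`, we have
`H₀/l₁⁰ > H₀/l₂⁰`, exactly one of the five listed cases holds, and in
particular the configurations `m = H₀/l₂⁰ ∧ M = H₀/l₁⁰` and
`m = M = H₀/l₂⁰` are impossible. -/
theorem five_cases_lemma (H₀ l₁₀ l₂₀ l₁ l₂ α₁ α₂ : ℝ)
    (hH₀ : 0 < H₀)
    (hl₁₀ : 0 < l₁₀) (hl₀lt : l₁₀ < l₂₀) (hsum₀ : l₁₀ + l₂₀ = 2)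
    (hl₁ : 0 < l₁) (hllt : l₁ < l₂) (hsum : l₁ + l₂ = 2)
    (hα₁ : H₀ < α₁) (hα₂ : H₀ < α₂) :
    H₀ / l₂₀ < H₀ / l₁₀ ∧
    (∃! i : Fin 5,
      [ H₀ / l₁₀ ≤ min (α₁ / l₁) (α₂ / l₂),
        H₀ / l₂₀ < min (α₁ / l₁) (α₂ / l₂) ∧ min (α₁ / l₁) (α₂ / l₂) < H₀ / l₁₀,
        min (α₁ / l₁) (α₂ / l₂) < H₀ / l₂₀,
        min (α₁ / l₁) (α₂ / l₂) = H₀ / l₂₀ ∧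
          min (α₁ / l₁) (α₂ / l₂) < max (α₁ / l₁) (α₂ / l₂) ∧
          max (α₁ / l₁) (α₂ / l₂) < H₀ / l₁₀,
        min (α₁ / l₁) (α₂ / l₂) = H₀ / l₂₀ ∧
          H₀ / l₁₀ < max (α₁ / l₁) (α₂ / l₂) ].get i) ∧
    ¬(min (α₁ / l₁) (α₂ / l₂) = H₀ / l₂₀ ∧
      max (α₁ / l₁) (α₂ / l₂) = H₀ / l₁₀) ∧
    ¬(min (α₁ / l₁) (α₂ / l₂) = max (α₁ / l₁) (α₂ / l₂) ∧
      min (α₁ / l₁) (α₂ / l₂) = H₀ / l₂₀) := by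
  have hl₂₀ : 0 < l₂₀ := hl₁₀.trans hl₀lt
  have hl₂ : 0 < l₂ := hl₁.trans hllt
  have hba : H₀ / l₂₀ < H₀ / l₁₀ := div_lt_div_of_pos_left hH₀ hl₁₀ hl₀lt
  have key : min (α₁ / l₁) (α₂ / l₂) = H₀ / l₂₀ →
      H₀ / l₁₀ < max (α₁ / l₁) (α₂ / l₂) := by
    intro h
    rcases min_choice (α₁ / l₁) (α₂ / l₂) with h' | h' <;> rw [h'] at h
    · exact lt_max_of_lt_right
        (lt_div_of_div_eq hH₀ hl₂₀ hl₁ hl₂ (by linarith) hα₁ hα₂ h)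
    · exact lt_max_of_lt_left
        (lt_div_of_div_eq hH₀ hl₂₀ hl₂ hl₁ (by linarith) hα₂ hα₁ h)
  -- From here on only the order of these four numbers and `hba`, `key` matter.
  generalize min (α₁ / l₁) (α₂ / l₂) = m at *
  generalize max (α₁ / l₁) (α₂ / l₂) = M at *
  generalize H₀ / l₁₀ = a at *
  generalize H₀ / l₂₀ = b at *
  refine ⟨hba, ?_, fun h => (key h.1).ne' h.2, fun h => ?_⟩
  · rcases lt_trichotomy m b with h | h | h
    · refine ⟨2, by simpa using h, fun i hi => ?_⟩
      fin_cases i <;> simp at hi ⊢ <;> grind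
    · have hM := key h
      refine ⟨4, by simpa using ⟨h, hM⟩, fun i hi => ?_⟩
      fin_cases i <;> simp at hi ⊢ <;> grind
    · rcases le_or_gt a m with h' | h'
      · refine ⟨0, by simpa using h', fun i hi => ?_⟩
        fin_cases i <;> simp at hi ⊢ <;> grind
      · refine ⟨1, by simpa using ⟨h, h'⟩, fun i hi => ?_⟩
        fin_cases i <;> simp at hi ⊢ <;> grind
  · have := key h.2
    linarith [h.1, h.2]
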